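/- Let L, M be differential graded Lie algebras over a field K of characteristic 0, i : L → M a Cartan homotopy with Lie derivative l_a = d_M i_a + i_{d_L a}, and N ⊂ M a differential graded Lie subalgebra with l(L) ⊂ N. Let TW(χ) = { (x, y(t)) ∈ N × M[t,dt] : y(0) = 0, y(1) = x } be the homotopy fibre of the inclusion χ : N ↪ M. Then there is a well-defined L∞ morphism L ⇢ TW(χ) whose linear part is the morphism of complexes a ↦ (l_a, t l_a + dt i_a). -/

import Mathlib

/-!
Basic homotopical algebra of differential graded Lie algebras over a field of
characteristic zero, following [Iacono, "Deformations and obstructions of pairs (X,D)"].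

A differential graded Lie algebra (DGLA) is encoded as a `K`-module together with an
internal `ℤ`-grading (a family of submodules whose direct sum is the whole module),
a differential of degree `+1` squaring to zero, and a bracket which is graded
skew-symmetric, satisfies the graded Jacobi identity and the graded Leibniz rule.
-/

universe u v w

/-- A `ℤ`-graded cochain complex structure on a `K`-module `V`: an internal grading
together with a differential of degree `+1` squaring to zero. -/
structure CochainStruct (K : Type u) [Field K] (V : Type v) [AddCommGroup V] [Module K V] :
    Type (max u v) where
  grading : ℤ → Submodule K V
  isInternal : DirectSum.IsInternal grading
  d : V →ₗ[K] V
  d_degree : ∀ i : ℤ, ∀ x ∈ grading i, d x ∈ grading (i + 1)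
  d_sq : ∀ x : V, d (d x) = 0

namespace CochainStruct

variable {K : Type u} [Field K] {V : Type v} [AddCommGroup V] [Module K V]
  {W : Type w} [AddCommGroup W] [Module K W]

/-- Degree `i` cocycles. -/
def cocycles (c : CochainStruct K V) (i : ℤ) : Submodule K V :=
  c.grading i ⊓ LinearMap.ker c.d

/-- Degree `i` coboundaries, as a submodule of the degree `i` cocycles. -/
def coboundaries (c : CochainStruct K V) (i : ℤ) : Submodule K (c.cocycles i) :=
  Submodule.comap (c.cocycles i).subtype (c.grading i ⊓ LinearMap.range c.d)

/-- The degree `i` cohomology of a graded cochain complex. -/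
def cohomology (c : CochainStruct K V) (i : ℤ) : Type v :=
  c.cocycles i ⧸ c.coboundaries i

instance (c : CochainStruct K V) (i : ℤ) : AddCommGroup (c.cohomology i) :=
  inferInstanceAs (AddCommGroup (c.cocycles i ⧸ c.coboundaries i))

instance (c : CochainStruct K V) (i : ℤ) : Module K (c.cohomology i) :=
  inferInstanceAs (Module K (c.cocycles i ⧸ c.coboundaries i))

end CochainStruct

/-- A (degree zero) morphism of graded cochain complexes. -/
structure CochainMap {K : Type u} [Field K] {V : Type v} {W : Type w}
    [AddCommGroup V] [Module K V] [AddCommGroup W] [Module K W]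
    (c : CochainStruct K V) (c' : CochainStruct K W) : Type (max u v w) where
  toFun : V →ₗ[K] W
  map_grading : ∀ i : ℤ, ∀ x ∈ c.grading i, toFun x ∈ c'.grading i
  map_d : ∀ x : V, toFun (c.d x) = c'.d (toFun x)

namespace CochainMap

variable {K : Type u} [Field K] {V : Type v} {W : Type w}
  [AddCommGroup V] [Module K V] [AddCommGroup W] [Module K W]
  {c : CochainStruct K V} {c' : CochainStruct K W}

/-- The induced map on cocycles. -/
def cocyclesMap (f : CochainMap c c') (i : ℤ) : c.cocycles i →ₗ[K] c'.cocycles i :=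
  f.toFun.restrict (p := c.cocycles i) (q := c'.cocycles i) fun x hx => by
    rcases Submodule.mem_inf.mp hx with ⟨h1, h2⟩
    refine Submodule.mem_inf.mpr ⟨f.map_grading i x h1, ?_⟩
    simp only [LinearMap.mem_ker] at h2 ⊢
    rw [← f.map_d, h2, map_zero]

/-- The induced map in cohomology. -/
def cohMap (f : CochainMap c c') (i : ℤ) :
    c.cohomology i →ₗ[K] c'.cohomology i :=
  Submodule.mapQ (c.coboundaries i) (c'.coboundaries i) (f.cocyclesMap i) (by
    rintro ⟨x, hx⟩ hmem
    simp only [CochainStruct.coboundaries, Submodule.mem_comap] at hmem ⊢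
    rcases Submodule.mem_inf.mp hmem with ⟨h1, h2⟩
    refine Submodule.mem_inf.mpr ⟨?_, ?_⟩
    · exact f.map_grading i x h1
    · rcases h2 with ⟨y, hy⟩
      exact ⟨f.toFun y, by
        have := f.map_d y
        simp only [Submodule.coe_subtype] at hy ⊢
        rw [← this, hy]
        rfl⟩)

end CochainMap

/-- A differential graded Lie algebra structure on a `K`-module `L`:
a graded cochain complex together with a degree zero graded bracket which is
graded skew-symmetric and satisfies the graded Jacobi identity and the graded
Leibniz rule. -/
structure DGLAStruct (K : Type u) [Field K] (L : Type v) [AddCommGroup L] [Module K L]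
    extends CochainStruct K L where
  bracket : L →ₗ[K] L →ₗ[K] L
  bracket_degree : ∀ i j : ℤ, ∀ x ∈ grading i, ∀ y ∈ grading j, bracket x y ∈ grading (i + j)
  bracket_skew : ∀ i j : ℤ, ∀ x ∈ grading i, ∀ y ∈ grading j,
    bracket x y = -(((-1 : K) ^ (i * j)) • bracket y x)
  bracket_jacobi : ∀ i j : ℤ, ∀ x ∈ grading i, ∀ y ∈ grading j, ∀ z : L,
    bracket x (bracket y z) =
      bracket (bracket x y) z + ((-1 : K) ^ (i * j)) • bracket y (bracket x z)
  bracket_leibniz : ∀ i : ℤ, ∀ x ∈ grading i, ∀ y : L,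
    d (bracket x y) = bracket (d x) y + ((-1 : K) ^ i) • bracket x (d y)

/-- A morphism of differential graded Lie algebras. -/
structure DGLAStructHom {K : Type u} [Field K] {L : Type v} {M : Type w}
    [AddCommGroup L] [Module K L] [AddCommGroup M] [Module K M]
    (g : DGLAStruct K L) (h : DGLAStruct K M) : Type (max u v w) where
  toFun : L →ₗ[K] M
  map_grading : ∀ i : ℤ, ∀ x ∈ g.grading i, toFun x ∈ h.grading i
  map_d : ∀ x : L, toFun (g.d x) = h.d (toFun x)
  map_bracket : ∀ x y : L, toFun (g.bracket x y) = h.bracket (toFun x) (toFun y)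

namespace DGLAStructHom

variable {K : Type u} [Field K] {L : Type v} {M : Type w}
  [AddCommGroup L] [Module K L] [AddCommGroup M] [Module K M]
  {g : DGLAStruct K L} {h : DGLAStruct K M}

/-- The underlying morphism of complexes of a morphism of DGLAs. -/
def toCochainMap (f : DGLAStructHom g h) :
    CochainMap g.toCochainStruct h.toCochainStruct :=
  ⟨f.toFun, f.map_grading, f.map_d⟩

/-- A quasi-isomorphism of DGLAs is a morphism inducing bijections in cohomology. -/
def IsQuasiIso (f : DGLAStructHom g h) : Prop :=
  ∀ i : ℤ, Function.Bijective (f.toCochainMap.cohMap i)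

end DGLAStructHom

/-- A bundled differential graded Lie algebra over `K`. -/
structure DGLA (K : Type u) [Field K] : Type (max u (v + 1)) where
  carrier : Type v
  [acg : AddCommGroup carrier]
  [mod : Module K carrier]
  str : DGLAStruct K carrier

attribute [instance] DGLA.acg DGLA.mod

namespace DGLA

variable {K : Type u} [Field K]

/-- Two DGLAs are related if there is a quasi-isomorphism from the first to the second. -/
def qisRel : DGLA.{u, v} K → DGLA.{u, v} K → Prop := fun X Y =>
  ∃ f : DGLAStructHom X.str Y.str, f.IsQuasiIso

/-- Homotopy equivalence of DGLAs: the equivalence relation generated by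
quasi-isomorphisms. -/
def HomotopyEquiv (X Y : DGLA.{u, v} K) : Prop :=
  Relation.EqvGen qisRel X Y

/-- A DGLA is abelian if its bracket is trivial. -/
def IsAbelian (X : DGLA.{u, v} K) : Prop :=
  ∀ x y : X.carrier, X.str.bracket x y = 0

/-- A DGLA is homotopy abelian if it is homotopy equivalent (i.e. quasi-isomorphic,
under the equivalence relation generated by quasi-isomorphisms) to an abelian DGLA. -/
def HomotopyAbelian (X : DGLA.{u, v} K) : Prop :=
  ∃ Y : DGLA.{u, v} K, Y.IsAbelian ∧ X.HomotopyEquiv Y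

end DGLA

/-- A zig-zag of morphisms of DGLAs (the backwards arrows being quasi-isomorphisms):
a morphism in the homotopy category of DGLAs, i.e. an `L∞` morphism of DGLAs. -/
inductive ZigZag {K : Type u} [Field K] : DGLA.{u, v} K → DGLA.{u, v} K → Type (max u (v + 1))
  | refl (X : DGLA.{u, v} K) : ZigZag X X
  | fwd {X Y Z : DGLA.{u, v} K} (f : DGLAStructHom X.str Y.str) (t : ZigZag Y Z) : ZigZag X Z
  | bwd {X Y Z : DGLA.{u, v} K} (f : DGLAStructHom Y.str X.str) (hf : f.IsQuasiIso)
      (t : ZigZag Y Z) : ZigZag X Z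

/-- The map induced in cohomology by a zig-zag of morphisms of DGLAs. -/
noncomputable def ZigZag.cohMap {K : Type u} [Field K] :
    ∀ {X Y : DGLA.{u, v} K}, ZigZag X Y → ∀ i : ℤ,
      X.str.toCochainStruct.cohomology i →ₗ[K] Y.str.toCochainStruct.cohomology i
  | _, _, .refl _, _ => LinearMap.id
  | _, _, .fwd f t, i => (t.cohMap i).comp (f.toCochainMap.cohMap i)
  | _, _, .bwd f hf t, i =>
      (t.cohMap i).comp
        ((LinearEquiv.ofBijective (f.toCochainMap.cohMap i) (hf i)).symm.toLinearMap)

/-!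
The differential graded vector space `M[t,dt] = M ⊗ K[t,dt]` of polynomial differential
forms on the affine line with coefficients in a DGLA `M`, homotopy fibres, and Cartan
homotopies.  An element of `M[t,dt]` is written `p(t) + q(t) dt` and encoded as the pair
of coefficient families `(p, q) : (ℕ →₀ M) × (ℕ →₀ M)`.
-/

/-- `M[t,dt]`: polynomial forms on the affine line with coefficients in `M`,
encoded as pairs `(p, q)` with `p(t) + q(t) dt`. -/
abbrev PolyDt (K : Type u) [Field K] (M : Type v) [AddCommGroup M] [Module K M] : Type v :=
  (ℕ →₀ M) × (ℕ →₀ M)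

section PolyDt

variable {K : Type u} [Field K] {M : Type v} [AddCommGroup M] [Module K M]

/-- Evaluation at `t = 0`, `dt = 0`. -/
noncomputable def evAt0 : PolyDt K M →ₗ[K] M :=
  (Finsupp.lapply 0).comp (LinearMap.fst K (ℕ →₀ M) (ℕ →₀ M))

/-- Evaluation at `t = 1`, `dt = 0`. -/
noncomputable def evAt1 : PolyDt K M →ₗ[K] M :=
  ((Finsupp.lsum K fun _ : ℕ => (LinearMap.id : M →ₗ[K] M)) :
      (ℕ →₀ M) →ₗ[K] M).comp (LinearMap.fst K (ℕ →₀ M) (ℕ →₀ M))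

/-- The element `t^n m` of `M[t,dt]`. -/
noncomputable def inlP (n : ℕ) (m : M) : PolyDt K M := (Finsupp.single n m, 0)

/-- The element `t^n dt m` of `M[t,dt]`. -/
noncomputable def inrP (n : ℕ) (m : M) : PolyDt K M := (0, Finsupp.single n m)

/-- The degree `j` part of `M[t,dt]` (with `t` of degree `0` and `dt` of degree `1`). -/
def polyGrading (h : DGLAStruct K M) (j : ℤ) : Submodule K (PolyDt K M) where
  carrier := {x | (∀ n : ℕ, x.1 n ∈ h.grading j) ∧ ∀ n : ℕ, x.2 n ∈ h.grading (j - 1)}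
  zero_mem' := ⟨fun n => by simp, fun n => by simp⟩
  add_mem' := by
    rintro x y ⟨hx1, hx2⟩ ⟨hy1, hy2⟩
    refine ⟨fun n => ?_, fun n => ?_⟩
    · have : (x + y).1 n = x.1 n + y.1 n := by simp
      rw [this]; exact (h.grading j).add_mem (hx1 n) (hy1 n)
    · have : (x + y).2 n = x.2 n + y.2 n := by simp
      rw [this]; exact (h.grading (j - 1)).add_mem (hx2 n) (hy2 n)
  smul_mem' := by
    rintro c x ⟨hx1, hx2⟩
    refine ⟨fun n => ?_, fun n => ?_⟩
    · have : (c • x).1 n = c • x.1 n := by simp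
      rw [this]; exact (h.grading j).smul_mem c (hx1 n)
    · have : (c • x).2 n = c • x.2 n := by simp
      rw [this]; exact (h.grading (j - 1)).smul_mem c (hx2 n)

/-- The property that a DGLA structure `mt` on `M[t,dt]` is *the* DGLA of polynomial
forms on the affine line with coefficients in `(M, h)`: it is characterised by its
grading and by its differential and bracket on the elements `t^n m` and `t^n dt m`. -/
structure IsPolyFormsDGLA (h : DGLAStruct K M) (mt : DGLAStruct K (PolyDt K M)) : Prop where
  grading_eq : ∀ j : ℤ, mt.grading j = polyGrading h j
  d_inl : ∀ (n : ℕ) (m : M), mt.d (inlP n m) = inlP n (h.d m) + inrP (n - 1) (n • m)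
  d_inr : ∀ (n : ℕ) (m : M), mt.d (inrP n m) = -inrP n (h.d m)
  bracket_ll : ∀ (n n' : ℕ) (m m' : M),
    mt.bracket (inlP n m) (inlP n' m') = inlP (n + n') (h.bracket m m')
  bracket_lr : ∀ i : ℤ, ∀ m ∈ h.grading i, ∀ (n n' : ℕ) (m' : M),
    mt.bracket (inlP n m) (inrP n' m') = ((-1 : K) ^ i) • inrP (n + n') (h.bracket m m')
  bracket_rl : ∀ (n n' : ℕ) (m m' : M),
    mt.bracket (inrP n m) (inlP n' m') = inrP (n + n') (h.bracket m m')
  bracket_rr : ∀ (n n' : ℕ) (m m' : M),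
    mt.bracket (inrP n m) (inrP n' m') = 0

end PolyDt

section Fibre

variable {K : Type u} [Field K] {L : Type v} {M : Type v}
  [AddCommGroup L] [Module K L] [AddCommGroup M] [Module K M]

/-- The underlying module of the homotopy fibre
`TW(χ) = { (l, m(t,dt)) ∈ L × M[t,dt] | m(0,0) = 0, m(1,0) = χ(l) }`
of a morphism of DGLAs `χ : L → M`. -/
noncomputable def fibreSub {g : DGLAStruct K L} {h : DGLAStruct K M}
    (χ : DGLAStructHom g h) : Submodule K (L × PolyDt K M) :=
  LinearMap.ker
    ((evAt0.comp (LinearMap.snd K L (PolyDt K M))).prod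
      ((evAt1.comp (LinearMap.snd K L (PolyDt K M))) -
        χ.toFun.comp (LinearMap.fst K L (PolyDt K M))))

/-- The property that a DGLA structure `tw` on the module underlying the homotopy fibre
of `χ : L → M` is *the* homotopy fibre DGLA: differential, bracket and grading are
computed componentwise from `L` and `M[t,dt]`. -/
structure IsHomotopyFibre {g : DGLAStruct K L} {h : DGLAStruct K M}
    (χ : DGLAStructHom g h) (mt : DGLAStruct K (PolyDt K M))
    (tw : DGLAStruct K ↥(fibreSub χ)) : Prop where
  grading_eq : ∀ i : ℤ, tw.grading i =
    Submodule.comap (fibreSub χ).subtype ((g.grading i).prod (mt.grading i))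
  d_eq : ∀ v : fibreSub χ, (tw.d v : L × PolyDt K M) =
    (g.d (v : L × PolyDt K M).1, mt.d (v : L × PolyDt K M).2)
  bracket_eq : ∀ v w : fibreSub χ, (tw.bracket v w : L × PolyDt K M) =
    (g.bracket (v : L × PolyDt K M).1 (w : L × PolyDt K M).1,
      mt.bracket (v : L × PolyDt K M).2 (w : L × PolyDt K M).2)

end Fibre

/-- A Cartan homotopy between differential graded Lie algebras: a degree `-1` linear
map `i : L → M` such that `i_{[a,b]} = [i_a, d_M i_b]` and `[i_a, i_b] = 0`. -/
structure CartanHomotopy {K : Type u} [Field K] {L : Type v} {M : Type w}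
    [AddCommGroup L] [Module K L] [AddCommGroup M] [Module K M]
    (g : DGLAStruct K L) (h : DGLAStruct K M) : Type (max u v w) where
  toFun : L →ₗ[K] M
  map_grading : ∀ i : ℤ, ∀ x ∈ g.grading i, toFun x ∈ h.grading (i - 1)
  cartan_bracket : ∀ a b : L, toFun (g.bracket a b) = h.bracket (toFun a) (h.d (toFun b))
  cartan_square : ∀ a b : L, h.bracket (toFun a) (toFun b) = 0

/-!
A Cartan homotopy `L → M` is the same thing as a morphism of DGLAs to `M` from the cone of `id_L`,
which is acyclic. So `TW(L → cone L) → L` is a quasi-isomorphism, and its source maps to `TW(χ)`.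

The image of this source in `L × M[t,dt]` already does the job, and there the DGLA axioms are
inherited. It is obtained by extending `i` to a `K[t]`-linear Cartan homotopy `I : tL[t] → M[t,dt]`,
with Lie derivative `Λ`, as `{(κ(1), Λ_κ + I_η) | κ, η ∈ tL[t], η(1) = 0}`. A closed element
with vanishing first component has the form `(0, d I_κ + I_ξ)` with `d I_ξ = 0`; since `I_ξ` has
neither `dt`-part nor constant term, `I_ξ = 0` in characteristic zero, and the element is exact.
The linear part comes from the section `a ↦ (a, Λ_{ta})`, for `Λ_{ta} = t l_a + dt i_a`.
-/

section GradedModules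

variable {K V W ι : Type*} [Field K] [AddCommGroup V] [Module K V] [AddCommGroup W] [Module K W]

theorem map_eq_zero_of_mem_iSup_ne {G : ι → Submodule K V} {H : ι → Submodule K W}
    (hH : iSupIndep H) {f : V →ₗ[K] W} (hf : ∀ i, ∀ x ∈ G i, f x ∈ H i) {i : ι} {x : V}
    (hx : x ∈ ⨆ (j) (_ : j ≠ i), G j) (hfx : f x ∈ H i) : f x = 0 := by
  have hle : ⨆ (j) (_ : j ≠ i), G j ≤ (⨆ (j) (_ : j ≠ i), H j).comap f :=
    iSup₂_le fun j hj y hy => Submodule.mem_iSup_of_mem j (Submodule.mem_iSup_of_mem hj (hf j y hy))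
  exact Submodule.disjoint_def.mp (hH i) _ hfx (hle hx)

theorem ker_le_iSup_ker_inf {G : ι → Submodule K V} {H : ι → Submodule K W}
    (hG : ⨆ i, G i = ⊤) (hH : iSupIndep H) {f : V →ₗ[K] W}
    (hf : ∀ i, ∀ x ∈ G i, f x ∈ H i) :
    LinearMap.ker f ≤ ⨆ i, LinearMap.ker f ⊓ G i := by
  intro x hx
  obtain ⟨v, hvG, rfl⟩ := (Submodule.mem_iSup_iff_exists_finsupp G x).mp (hG ▸ Submodule.mem_top)
  have hsum : ∑ i ∈ v.support, f (v i) = 0 := by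
    simpa only [Finsupp.sum, map_sum, LinearMap.mem_ker] using hx
  have hker := (iSupIndep_iff_finsetSum_eq_zero_imp_eq_zero H).mp hH v.support (fun i => f (v i))
    (fun i _ => hf i _ (hvG i)) hsum
  exact Submodule.sum_mem _ fun i hi => Submodule.mem_iSup_of_mem i ⟨hker i hi, hvG i⟩

theorem single_mem_finsupp_submodule {p : ι → Submodule K V} {n : ι} {a : V} (ha : a ∈ p n) :
    Finsupp.single n a ∈ Finsupp.submodule p :=
  (Finsupp.comap_lsingle_submodule p n).ge ha

theorem finsupp_submodule_induction {p : ι → Submodule K V}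
    {motive : ∀ x : ι →₀ V, x ∈ Finsupp.submodule p → Prop} (zero : motive 0 (zero_mem _))
    (add : ∀ x y hx hy, motive x hx → motive y hy → motive (x + y) (add_mem hx hy))
    (single : ∀ n a (ha : a ∈ p n),
      motive (Finsupp.single n a) (single_mem_finsupp_submodule ha))
    {x : ι →₀ V} (hx : x ∈ Finsupp.submodule p) : motive x hx := by
  suffices ∃ h, motive x h from this.2
  rw [← x.sum_single]
  exact Finset.sum_induction _ (fun y => ∃ h, motive y h)
    (fun y z ⟨hy, my⟩ ⟨hz, mz⟩ => ⟨_, add y z hy hz my mz⟩) ⟨_, zero⟩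
    fun n _ => ⟨_, single n _ (hx n)⟩

theorem isInternal_finsupp_submodule {σ : Type*} [DecidableEq ι] {G : ι → Submodule K V}
    (hG : DirectSum.IsInternal G) :
    DirectSum.IsInternal fun i => Finsupp.submodule fun _ : σ => G i := by
  rw [DirectSum.isInternal_submodule_iff_iSupIndep_and_iSup_eq_top]
  refine ⟨fun i => Submodule.disjoint_def.mpr fun x hx hx' => Finsupp.ext fun n => ?_,
    eq_top_iff.mpr fun x _ => ?_⟩
  · exact map_eq_zero_of_mem_iSup_ne hG.submodule_iSupIndep (f := Finsupp.lapply n)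
        (G := fun i => Finsupp.submodule fun _ : σ => G i) (fun _ _ hy => hy n) hx' (hx n)
  · induction x using Finsupp.induction_linear with
    | zero => exact zero_mem _
    | add x y hx hy => exact add_mem (hx trivial) (hy trivial)
    | single n a =>
      have hle : ⨆ i, G i ≤
          (⨆ i, Finsupp.submodule fun _ : σ => G i).comap (Finsupp.lsingle n) :=
        iSup_le fun i b hb => Submodule.mem_iSup_of_mem i (single_mem_finsupp_submodule hb)
      exact hle (hG.submodule_iSup_eq_top ▸ Submodule.mem_top)

end GradedModules

namespace CochainStruct

variable {K V W : Type*} [Field K] [AddCommGroup V] [Module K V] [AddCommGroup W] [Module K W]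

theorem iSup_grading (c : CochainStruct K V) : ⨆ i, c.grading i = ⊤ :=
  c.isInternal.submodule_iSup_eq_top

theorem iSupIndep_grading (c : CochainStruct K V) : iSupIndep c.grading :=
  c.isInternal.submodule_iSupIndep

theorem mem_of_grading_le (c : CochainStruct K V) {T : Submodule K V}
    (hT : ∀ i, c.grading i ≤ T) (x : V) : x ∈ T :=
  iSup_le hT (c.iSup_grading ▸ Submodule.mem_top)

theorem hom_ext (c : CochainStruct K V) {f g : V →ₗ[K] W}
    (h : ∀ i, ∀ x ∈ c.grading i, f x = g x) : f = g :=
  LinearMap.ext <| c.mem_of_grading_le (T := LinearMap.eqLocus f g) h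

theorem mem_grading_of_map_mem (c : CochainStruct K V) (c' : CochainStruct K W) {f : V →ₗ[K] W}
    (hf : Function.Injective f) (hgr : ∀ i, ∀ x ∈ c.grading i, f x ∈ c'.grading i)
    {p : ℤ} {x : V} (hx : f x ∈ c'.grading p) : x ∈ c.grading p := by
  have hsplit : x ∈ c.grading p ⊔ ⨆ (i) (_ : i ≠ p), c.grading i := by
    rw [← iSup_split_single c.grading p, c.iSup_grading]
    trivial
  obtain ⟨y, hy, z, hz, rfl⟩ := Submodule.mem_sup.mp hsplit
  have hfz : f z ∈ c'.grading p := by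
    simpa only [map_add, add_sub_cancel_left] using sub_mem hx (hgr p y hy)
  have hz0 : z = 0 := hf <| by
    rw [map_zero, map_eq_zero_of_mem_iSup_ne c'.iSupIndep_grading hgr hz hfz]
  rwa [hz0, add_zero]

end CochainStruct

namespace CochainMap

variable {K V W U : Type*} [Field K] [AddCommGroup V] [Module K V] [AddCommGroup W] [Module K W]
  [AddCommGroup U] [Module K U]
  {c : CochainStruct K V} {c' : CochainStruct K W} {c'' : CochainStruct K U}

/-- Composition of morphisms of complexes. -/
def comp (g : CochainMap c' c'') (f : CochainMap c c') : CochainMap c c'' where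
  toFun := g.toFun ∘ₗ f.toFun
  map_grading i x hx := g.map_grading i _ (f.map_grading i x hx)
  map_d x := by simp only [LinearMap.comp_apply, f.map_d, g.map_d]

theorem cohMap_comp_apply (g : CochainMap c' c'') (f : CochainMap c c') (i : ℤ)
    (α : c.cohomology i) : (g.comp f).cohMap i α = g.cohMap i (f.cohMap i α) := by
  obtain ⟨x, rfl⟩ := Submodule.Quotient.mk_surjective _ α
  rfl

theorem cohMap_cohMap_of_section {p : CochainMap c c'} {s : CochainMap c' c}
    (hs : ∀ x, p.toFun (s.toFun x) = x) (i : ℤ) (α : c'.cohomology i) :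
    p.cohMap i (s.cohMap i α) = α := by
  obtain ⟨x, rfl⟩ := Submodule.Quotient.mk_surjective _ α
  exact congrArg Submodule.Quotient.mk (Subtype.ext (hs x))

theorem cohMap_bijective_of_section {p : CochainMap c c'} {s : CochainMap c' c}
    (hs : ∀ x, p.toFun (s.toFun x) = x)
    (hker : ∀ x, p.toFun x = 0 → c.d x = 0 → ∃ y, c.d y = x) (i : ℤ) :
    Function.Bijective (p.cohMap i) := by
  refine ⟨?_, fun α => ⟨s.cohMap i α, cohMap_cohMap_of_section hs i α⟩⟩
  rw [← LinearMap.ker_eq_bot, LinearMap.ker_eq_bot']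
  intro α hα
  obtain ⟨⟨x, hxi, hx⟩, rfl⟩ := Submodule.Quotient.mk_surjective _ α
  obtain ⟨-, z, hz : c'.d z = p.toFun x⟩ := (Submodule.Quotient.mk_eq_zero _).mp hα
  obtain ⟨y, hy⟩ : ∃ y, c.d y = x - s.toFun (p.toFun x) := by
    refine hker _ (by rw [map_sub, hs, sub_self]) ?_
    rw [map_sub, LinearMap.mem_ker.mp hx, ← s.map_d, ← p.map_d, LinearMap.mem_ker.mp hx]
    simp only [map_zero, sub_zero]
  refine (Submodule.Quotient.mk_eq_zero _).mpr ⟨hxi, y + s.toFun z, ?_⟩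
  rw [map_add, hy, ← s.map_d, hz, sub_add_cancel]
  rfl

end CochainMap

theorem ZigZag.exists_cohMap_eq_of_section {K : Type u} [Field K] {A B C : Type v}
    [AddCommGroup A] [Module K A] [AddCommGroup B] [Module K B] [AddCommGroup C] [Module K C]
    {gA : DGLAStruct K A} {gB : DGLAStruct K B} {gC : DGLAStruct K C}
    {p : DGLAStructHom gB gA} (hp : p.IsQuasiIso) (F : DGLAStructHom gB gC)
    {s : CochainMap gA.toCochainStruct gB.toCochainStruct} (hs : ∀ a, p.toFun (s.toFun a) = a) :
    ∃ zz : ZigZag (DGLA.mk A gA) (DGLA.mk C gC),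
      ∀ i, zz.cohMap i = (F.toCochainMap.comp s).cohMap i := by
  refine ⟨.bwd (Y := DGLA.mk B gB) p hp (.fwd F (.refl _)), fun i => ?_⟩
  ext α
  have hsymm : (LinearEquiv.ofBijective (p.toCochainMap.cohMap i) (hp i)).symm α =
      s.cohMap i α := by
    rw [LinearEquiv.symm_apply_eq]
    exact (CochainMap.cohMap_cohMap_of_section (p := p.toCochainMap) hs i α).symm
  rw [CochainMap.cohMap_comp_apply, ← hsymm]
  rfl

section Subalgebras

variable {K L M : Type*} [Field K] [AddCommGroup L] [Module K L] [AddCommGroup M] [Module K M]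

/-- The direct product of two DGLAs, with componentwise operations. -/
def DGLAStruct.prod (g : DGLAStruct K L) (h : DGLAStruct K M) : DGLAStruct K (L × M) where
  grading i := (g.grading i).prod (h.grading i)
  isInternal := by
    rw [DirectSum.isInternal_submodule_iff_iSupIndep_and_iSup_eq_top]
    refine ⟨fun i => Submodule.disjoint_def.mpr fun x hx hx' => Prod.ext ?_ ?_,
      eq_top_iff.mpr fun ⟨x, y⟩ _ => ?_⟩
    · exact map_eq_zero_of_mem_iSup_ne (G := fun i => (g.grading i).prod (h.grading i))
        g.iSupIndep_grading (f := LinearMap.fst K L M) (fun _ _ hy => hy.1) hx' hx.1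
    · exact map_eq_zero_of_mem_iSup_ne (G := fun i => (g.grading i).prod (h.grading i))
        h.iSupIndep_grading (f := LinearMap.snd K L M) (fun _ _ hy => hy.2) hx' hx.2
    · have hx : LinearMap.inl K L M x ∈ ⨆ i, (g.grading i).prod (h.grading i) :=
        g.mem_of_grading_le (T := (⨆ i, (g.grading i).prod (h.grading i)).comap (.inl K L M))
          (fun i x hx => Submodule.mem_iSup_of_mem i ⟨hx, zero_mem _⟩) x
      have hy : LinearMap.inr K L M y ∈ ⨆ i, (g.grading i).prod (h.grading i) :=
        h.mem_of_grading_le (T := (⨆ i, (g.grading i).prod (h.grading i)).comap (.inr K L M))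
          (fun i y hy => Submodule.mem_iSup_of_mem i ⟨zero_mem _, hy⟩) y
      simpa only [LinearMap.inl_apply, LinearMap.inr_apply, Prod.mk_add_mk, add_zero, zero_add]
        using add_mem hx hy
  d := g.d.prodMap h.d
  d_degree i x hx := ⟨g.d_degree i _ hx.1, h.d_degree i _ hx.2⟩
  d_sq x := Prod.ext (g.d_sq _) (h.d_sq _)
  bracket := LinearMap.mk₂ K (fun x y => (g.bracket x.1 y.1, h.bracket x.2 y.2))
    (by intros; simp) (by intros; simp) (by intros; simp) (by intros; simp)
  bracket_degree i j x hx y hy :=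
    ⟨g.bracket_degree i j _ hx.1 _ hy.1, h.bracket_degree i j _ hx.2 _ hy.2⟩
  bracket_skew i j x hx y hy :=
    Prod.ext (g.bracket_skew i j _ hx.1 _ hy.1) (h.bracket_skew i j _ hx.2 _ hy.2)
  bracket_jacobi i j x hx y hy z :=
    Prod.ext (g.bracket_jacobi i j _ hx.1 _ hy.1 _) (h.bracket_jacobi i j _ hx.2 _ hy.2 _)
  bracket_leibniz i x hx y :=
    Prod.ext (g.bracket_leibniz i _ hx.1 _) (h.bracket_leibniz i _ hx.2 _)

/-- A differential graded Lie subalgebra: a submodule closed under the differential and the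
bracket and spanned by its homogeneous elements. -/
structure DGLieSubalgebra (g : DGLAStruct K L) extends Submodule K L where
  le_iSup_inf_grading : toSubmodule ≤ ⨆ i, toSubmodule ⊓ g.grading i
  d_mem : ∀ x ∈ toSubmodule, g.d x ∈ toSubmodule
  bracket_mem : ∀ x ∈ toSubmodule, ∀ y ∈ toSubmodule, g.bracket x y ∈ toSubmodule

namespace DGLieSubalgebra

variable {g : DGLAStruct K L}

/-- The DGLA structure induced on a differential graded Lie subalgebra. -/
def toDGLAStruct (S : DGLieSubalgebra g) : DGLAStruct K S.toSubmodule where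
  grading i := (g.grading i).comap S.subtype
  isInternal := by
    rw [DirectSum.isInternal_submodule_iff_iSupIndep_and_iSup_eq_top]
    refine ⟨fun i => Submodule.disjoint_def.mpr fun x hx hx' => Subtype.ext ?_, ?_⟩
    · exact map_eq_zero_of_mem_iSup_ne g.iSupIndep_grading (f := S.subtype)
        (fun _ _ hy => hy) hx' hx
    · refine Submodule.map_injective_of_injective S.subtype_injective ?_
      refine le_antisymm (Submodule.map_mono le_top) ?_
      rw [Submodule.map_top, Submodule.range_subtype, Submodule.map_iSup]
      simpa only [Submodule.map_comap_subtype] using S.le_iSup_inf_grading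
  d := g.d.restrict S.d_mem
  d_degree i x hx := g.d_degree i x hx
  d_sq x := Subtype.ext (g.d_sq x)
  bracket := LinearMap.mk₂ K (fun x y => ⟨g.bracket x y, S.bracket_mem x x.2 y y.2⟩)
    (by intros; ext; simp) (by intros; ext; simp) (by intros; ext; simp) (by intros; ext; simp)
  bracket_degree i j x hx y hy := g.bracket_degree i j x hx y hy
  bracket_skew i j x hx y hy := Subtype.ext (g.bracket_skew i j x hx y hy)
  bracket_jacobi i j x hx y hy z := Subtype.ext (g.bracket_jacobi i j x hx y hy z)
  bracket_leibniz i x hx y := Subtype.ext (g.bracket_leibniz i x hx y)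

/-- The first projection of a differential graded Lie subalgebra of a product. -/
def fst {h : DGLAStruct K M} (S : DGLieSubalgebra (g.prod h)) :
    DGLAStructHom S.toDGLAStruct g where
  toFun := LinearMap.fst K L M ∘ₗ S.subtype
  map_grading _ _ hx := hx.1
  map_d _ := rfl
  map_bracket _ _ := rfl

end DGLieSubalgebra

end Subalgebras

/-- A linear lift of a morphism of DGLAs through an injective one is a morphism of DGLAs. -/
def DGLAStructHom.liftOfInjective {K L M N : Type*} [Field K] [AddCommGroup L] [Module K L]
    [AddCommGroup M] [Module K M] [AddCommGroup N] [Module K N]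
    {gL : DGLAStruct K L} {gM : DGLAStruct K M} {gN : DGLAStruct K N}
    (χ : DGLAStructHom gN gM) (hχ : Function.Injective χ.toFun) (φ : DGLAStructHom gL gM)
    (ψ : L →ₗ[K] N) (hψ : ∀ a, χ.toFun (ψ a) = φ.toFun a) : DGLAStructHom gL gN where
  toFun := ψ
  map_grading p a ha := gN.mem_grading_of_map_mem gM.toCochainStruct hχ χ.map_grading <| by
    rw [hψ]
    exact φ.map_grading p a ha
  map_d a := hχ <| by rw [hψ, φ.map_d, χ.map_d, hψ]
  map_bracket a b := hχ <| by rw [hψ, φ.map_bracket, χ.map_bracket, hψ, hψ]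

namespace CartanHomotopy

variable {K : Type u} {L : Type v} {M : Type w} [Field K] [AddCommGroup L] [Module K L]
  [AddCommGroup M] [Module K M] {gL : DGLAStruct K L} {gM : DGLAStruct K M}

/-- The Lie derivative `l_a = d_M i_a + i_{d_L a}` of a Cartan homotopy. -/
def lieDeriv (ci : CartanHomotopy gL gM) : L →ₗ[K] M :=
  gM.d ∘ₗ ci.toFun + ci.toFun ∘ₗ gL.d

theorem lieDeriv_apply (ci : CartanHomotopy gL gM) (a : L) :
    ci.lieDeriv a = gM.d (ci.toFun a) + ci.toFun (gL.d a) :=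
  rfl

theorem d_lieDeriv (ci : CartanHomotopy gL gM) (a : L) :
    gM.d (ci.lieDeriv a) = ci.lieDeriv (gL.d a) := by
  simp only [lieDeriv_apply, map_add, map_zero, gM.d_sq, gL.d_sq, zero_add, add_zero]

theorem lieDeriv_mem (ci : CartanHomotopy gL gM) {p : ℤ} {a : L} (ha : a ∈ gL.grading p) :
    ci.lieDeriv a ∈ gM.grading p := by
  rw [lieDeriv_apply]
  refine add_mem ?_ ?_
  · simpa only [sub_add_cancel] using gM.d_degree _ _ (ci.map_grading p a ha)
  · simpa only [add_sub_cancel_right] using ci.map_grading _ _ (gL.d_degree p a ha)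

theorem bracket_toFun_lieDeriv (ci : CartanHomotopy gL gM) (a b : L) :
    gM.bracket (ci.toFun a) (ci.lieDeriv b) = ci.toFun (gL.bracket a b) := by
  rw [lieDeriv_apply, map_add, ci.cartan_square, add_zero, ci.cartan_bracket]

theorem bracket_lieDeriv_toFun (ci : CartanHomotopy gL gM) {p : ℤ} {a : L}
    (ha : a ∈ gL.grading p) (b : L) :
    gM.bracket (ci.lieDeriv a) (ci.toFun b) = (-1 : K) ^ p • ci.toFun (gL.bracket a b) := by
  have hleib := gM.bracket_leibniz (p - 1) _ (ci.map_grading p a ha) (ci.toFun b)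
  rw [ci.cartan_square, map_zero, ← ci.cartan_bracket, zpow_sub_one₀ (by simp), inv_neg_one,
    mul_neg_one, neg_smul, eq_comm, add_neg_eq_zero] at hleib
  rw [lieDeriv_apply, map_add, LinearMap.add_apply, ci.cartan_square, add_zero, hleib]

theorem bracket_lieDeriv (ci : CartanHomotopy gL gM) (a b : L) :
    gM.bracket (ci.lieDeriv a) (ci.lieDeriv b) = ci.lieDeriv (gL.bracket a b) := by
  suffices gM.bracket.flip (ci.lieDeriv b) ∘ₗ ci.lieDeriv = ci.lieDeriv ∘ₗ gL.bracket.flip b from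
    LinearMap.congr_fun this a
  refine gL.hom_ext fun p a ha => ?_
  simp only [LinearMap.comp_apply, LinearMap.flip_apply]
  have hleib := gM.bracket_leibniz (p - 1) _ (ci.map_grading p a ha) (ci.lieDeriv b)
  rw [d_lieDeriv, bracket_toFun_lieDeriv, bracket_toFun_lieDeriv, zpow_sub_one₀ (by simp),
    inv_neg_one, mul_neg_one, neg_smul, ← sub_eq_add_neg] at hleib
  rw [lieDeriv_apply ci (gL.bracket a b), hleib, gL.bracket_leibniz p a ha, map_add, map_smul,
    lieDeriv_apply ci a, map_add, LinearMap.add_apply, bracket_toFun_lieDeriv]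
  abel

/-- The Lie derivative of a Cartan homotopy, as a morphism of DGLAs. -/
def lieDerivHom (ci : CartanHomotopy gL gM) : DGLAStructHom gL gM where
  toFun := ci.lieDeriv
  map_grading _ _ := ci.lieDeriv_mem
  map_d a := (ci.d_lieDeriv a).symm
  map_bracket a b := (ci.bracket_lieDeriv a b).symm

section Resolution

variable {P Q A : Type*} [AddCommGroup P] [Module K P] [AddCommGroup Q] [Module K Q]
  [AddCommGroup A] [Module K A] {gP : DGLAStruct K P} {gQ : DGLAStruct K Q} {gA : DGLAStruct K A}

/-- The map `(κ, η) ↦ (f κ, Λ_κ + I_η)` for `κ ∈ P` and `η ∈ ker f`, where `I` is a Cartan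
homotopy with Lie derivative `Λ` and `f` a morphism of DGLAs. -/
def resolutionMap (I : CartanHomotopy gP gQ) (f : DGLAStructHom gP gA) :
    P × LinearMap.ker f.toFun →ₗ[K] A × Q :=
  (f.toFun.prod I.lieDeriv).coprod (LinearMap.inr K A Q ∘ₗ I.toFun ∘ₗ Submodule.subtype _)

theorem mem_range_resolutionMap {I : CartanHomotopy gP gQ} {f : DGLAStructHom gP gA} {x : A × Q} :
    x ∈ LinearMap.range (I.resolutionMap f) ↔
      ∃ κ η, f.toFun η = 0 ∧ x = (f.toFun κ, I.lieDeriv κ + I.toFun η) := by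
  constructor
  · rintro ⟨⟨κ, η, hη⟩, rfl⟩
    exact ⟨κ, η, hη, by simp [resolutionMap]⟩
  · rintro ⟨κ, η, hη, rfl⟩
    exact ⟨(κ, ⟨η, hη⟩), by simp [resolutionMap]⟩

theorem lieDeriv_mem_range_resolutionMap (I : CartanHomotopy gP gQ) (f : DGLAStructHom gP gA)
    (κ : P) : (f.toFun κ, I.lieDeriv κ) ∈ LinearMap.range (I.resolutionMap f) :=
  mem_range_resolutionMap.mpr ⟨κ, 0, by simp⟩

theorem toFun_mem_range_resolutionMap (I : CartanHomotopy gP gQ) {f : DGLAStructHom gP gA}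
    {η : P} (hη : f.toFun η = 0) : (0, I.toFun η) ∈ LinearMap.range (I.resolutionMap f) :=
  mem_range_resolutionMap.mpr ⟨0, η, hη, by simp⟩

theorem range_resolutionMap_le_iff {I : CartanHomotopy gP gQ} {f : DGLAStructHom gP gA}
    {T : Submodule K (A × Q)} :
    LinearMap.range (I.resolutionMap f) ≤ T ↔
      (∀ κ, (f.toFun κ, I.lieDeriv κ) ∈ T) ∧ ∀ η, f.toFun η = 0 → (0, I.toFun η) ∈ T := by
  refine ⟨fun h => ⟨fun κ => h (I.lieDeriv_mem_range_resolutionMap f κ),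
    fun η hη => h (I.toFun_mem_range_resolutionMap hη)⟩, fun h x hx => ?_⟩
  obtain ⟨κ, η, hη, rfl⟩ := mem_range_resolutionMap.mp hx
  simpa using add_mem (h.1 κ) (h.2 η hη)

theorem range_resolutionMap_le_iSup_inf_grading (I : CartanHomotopy gP gQ)
    (f : DGLAStructHom gP gA) :
    LinearMap.range (I.resolutionMap f) ≤
      ⨆ i, LinearMap.range (I.resolutionMap f) ⊓ (gA.prod gQ).grading i := by
  refine range_resolutionMap_le_iff.mpr ⟨?_, fun η hη => ?_⟩
  · refine gP.mem_of_grading_le (T := Submodule.comap (f.toFun.prod I.lieDeriv)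
      (⨆ i, LinearMap.range (I.resolutionMap f) ⊓ (gA.prod gQ).grading i)) fun p κ hκ => ?_
    exact Submodule.mem_iSup_of_mem p
      ⟨I.lieDeriv_mem_range_resolutionMap f κ, f.map_grading p κ hκ, I.lieDeriv_mem hκ⟩
  · have hker : LinearMap.ker f.toFun ≤ Submodule.comap (LinearMap.inr K A Q ∘ₗ I.toFun)
        (⨆ i, LinearMap.range (I.resolutionMap f) ⊓ (gA.prod gQ).grading i) :=
      (ker_le_iSup_ker_inf gP.iSup_grading gA.iSupIndep_grading f.map_grading).trans <|
        iSup_le fun p η hη => Submodule.mem_iSup_of_mem (p - 1)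
          ⟨I.toFun_mem_range_resolutionMap hη.1, zero_mem _, I.map_grading p η hη.2⟩
    exact hker hη

theorem d_mem_range_resolutionMap (I : CartanHomotopy gP gQ) (f : DGLAStructHom gP gA)
    {x : A × Q} (hx : x ∈ LinearMap.range (I.resolutionMap f)) :
    (gA.prod gQ).d x ∈ LinearMap.range (I.resolutionMap f) := by
  obtain ⟨κ, η, hη, rfl⟩ := mem_range_resolutionMap.mp hx
  refine mem_range_resolutionMap.mpr ⟨gP.d κ + η, -gP.d η, ?_, Prod.ext ?_ ?_⟩
  · rw [map_neg, f.map_d, hη, map_zero, neg_zero]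
  · rw [map_add, hη, add_zero, f.map_d]
    rfl
  · change gQ.d (I.lieDeriv κ + I.toFun η) = _
    simp only [map_add, d_lieDeriv, lieDeriv_apply I η, map_neg]
    abel

theorem bracket_lieDeriv_mem_range_resolutionMap (I : CartanHomotopy gP gQ)
    {f : DGLAStructHom gP gA} (κ : P) {θ : P} (hθ : f.toFun θ = 0) :
    (0, gQ.bracket (I.lieDeriv κ) (I.toFun θ)) ∈ LinearMap.range (I.resolutionMap f) := by
  refine gP.mem_of_grading_le (T := (LinearMap.range (I.resolutionMap f)).comap
    (LinearMap.inr K A Q ∘ₗ gQ.bracket.flip (I.toFun θ) ∘ₗ I.lieDeriv)) (fun p κ hκ => ?_) κ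
  have hbr : f.toFun (gP.bracket κ θ) = 0 := by rw [f.map_bracket, hθ, map_zero]
  simpa only [Submodule.mem_comap, LinearMap.comp_apply, LinearMap.flip_apply,
    LinearMap.inr_apply, I.bracket_lieDeriv_toFun hκ, Prod.smul_mk, smul_zero]
    using Submodule.smul_mem _ ((-1 : K) ^ p) (I.toFun_mem_range_resolutionMap hbr)

theorem bracket_mem_range_resolutionMap (I : CartanHomotopy gP gQ) (f : DGLAStructHom gP gA)
    {x y : A × Q} (hx : x ∈ LinearMap.range (I.resolutionMap f))
    (hy : y ∈ LinearMap.range (I.resolutionMap f)) :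
    (gA.prod gQ).bracket x y ∈ LinearMap.range (I.resolutionMap f) := by
  obtain ⟨κ, η, hη, rfl⟩ := mem_range_resolutionMap.mp hx
  obtain ⟨lam, θ, hθ, rfl⟩ := mem_range_resolutionMap.mp hy
  have hbr : f.toFun (gP.bracket η lam) = 0 := by
    rw [f.map_bracket, hη, map_zero, LinearMap.zero_apply]
  have hsum := add_mem (add_mem (I.lieDeriv_mem_range_resolutionMap f (gP.bracket κ lam))
    (I.toFun_mem_range_resolutionMap hbr)) (I.bracket_lieDeriv_mem_range_resolutionMap κ hθ)
  convert hsum using 1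
  refine Prod.ext ?_ ?_
  · change gA.bracket (f.toFun κ) (f.toFun lam) = _
    simp only [f.map_bracket, Prod.fst_add, add_zero]
  · change gQ.bracket (I.lieDeriv κ + I.toFun η) (I.lieDeriv lam + I.toFun θ) = _
    simp only [map_add, LinearMap.add_apply, bracket_lieDeriv, bracket_toFun_lieDeriv,
      I.cartan_square, Prod.snd_add, add_zero]

/-- The differential graded Lie subalgebra `{(f κ, Λ_κ + I_η) | f η = 0}` of `A × Q`. It is the
image of the subalgebra `P ⊕ (ker f)[1]` of the cone of `id_P`, and the first projection makes it a
resolution of `A` as soon as `f` has a section and `d` is injective on the image of `I`. -/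
def resolution (I : CartanHomotopy gP gQ) (f : DGLAStructHom gP gA) :
    DGLieSubalgebra (gA.prod gQ) where
  toSubmodule := LinearMap.range (I.resolutionMap f)
  le_iSup_inf_grading := I.range_resolutionMap_le_iSup_inf_grading f
  d_mem _ := I.d_mem_range_resolutionMap f
  bracket_mem _ hx _ hy := I.bracket_mem_range_resolutionMap f hx hy

/-- The section `a ↦ (a, Λ_{s a})` of the first projection of the resolution. -/
def resolutionSection (I : CartanHomotopy gP gQ) {f : DGLAStructHom gP gA}
    {s : CochainMap gA.toCochainStruct gP.toCochainStruct} (hs : ∀ a, f.toFun (s.toFun a) = a) :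
    CochainMap gA.toCochainStruct (I.resolution f).toDGLAStruct.toCochainStruct where
  toFun := (LinearMap.id.prod (I.lieDeriv ∘ₗ s.toFun)).codRestrict _ fun a => by
    have hmem := I.lieDeriv_mem_range_resolutionMap f (s.toFun a)
    rw [hs] at hmem
    exact hmem
  map_grading p a ha := ⟨ha, I.lieDeriv_mem (s.map_grading p a ha)⟩
  map_d a := Subtype.ext <| Prod.ext rfl <| by
    change I.lieDeriv (s.toFun (gA.d a)) = gQ.d (I.lieDeriv (s.toFun a))
    rw [s.map_d, d_lieDeriv]

theorem fst_resolutionSection (I : CartanHomotopy gP gQ) {f : DGLAStructHom gP gA}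
    {s : CochainMap gA.toCochainStruct gP.toCochainStruct} (hs : ∀ a, f.toFun (s.toFun a) = a)
    (a : A) : (I.resolution f).fst.toFun ((I.resolutionSection hs).toFun a) = a :=
  rfl

theorem fst_resolution_isQuasiIso (I : CartanHomotopy gP gQ) {f : DGLAStructHom gP gA}
    {s : CochainMap gA.toCochainStruct gP.toCochainStruct} (hs : ∀ a, f.toFun (s.toFun a) = a)
    (hI : ∀ η, gQ.d (I.toFun η) = 0 → I.toFun η = 0) : (I.resolution f).fst.IsQuasiIso := by
  refine CochainMap.cohMap_bijective_of_section (I.fst_resolutionSection hs) ?_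
  rintro ⟨x, hx⟩ hfst hd
  -- The element is `(0, d I_κ + I_ξ)` with `ξ = dκ + η`; it is closed, so `I_ξ = 0`.
  obtain ⟨κ, η, -, rfl⟩ := mem_range_resolutionMap.mp hx
  have hκ : f.toFun κ = 0 := hfst
  have hdI : gQ.d (I.toFun (gP.d κ + η)) = 0 := by
    have hd' : gQ.d (I.lieDeriv κ + I.toFun η) = 0 := congrArg (fun z => z.1.2) hd
    simpa only [lieDeriv_apply, map_add, gQ.d_sq, zero_add] using hd'
  refine ⟨⟨(0, I.toFun κ), I.toFun_mem_range_resolutionMap hκ⟩, Subtype.ext (Prod.ext ?_ ?_)⟩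
  · exact (map_zero gA.d).trans hκ.symm
  · change gQ.d (I.toFun κ) = I.lieDeriv κ + I.toFun η
    rw [lieDeriv_apply, add_assoc, ← map_add, hI _ hdI, add_zero]

end Resolution

end CartanHomotopy

namespace DGLAStruct

variable {K L : Type*} [Field K] [AddCommGroup L] [Module K L]

/-- The bracket of the DGLA `tL[t]`, where `κ : ℕ →₀ L` stands for `∑ₙ κₙ tⁿ⁺¹`. -/
noncomputable def tPolyBracket (g : DGLAStruct K L) :
    (ℕ →₀ L) →ₗ[K] (ℕ →₀ L) →ₗ[K] (ℕ →₀ L) :=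
  Finsupp.lsum K fun n => LinearMap.flip <| Finsupp.lsum K fun m =>
    (g.bracket.compr₂ (Finsupp.lsingle (n + m + 1))).flip

theorem tPolyBracket_single (g : DGLAStruct K L) (n m : ℕ) (a b : L) :
    g.tPolyBracket (Finsupp.single n a) (Finsupp.single m b) =
      Finsupp.single (n + m + 1) (g.bracket a b) := by
  simp [tPolyBracket]

theorem tPolyBracket_mem (g : DGLAStruct K L) {i j : ℤ} {x y : ℕ →₀ L}
    (hx : x ∈ Finsupp.submodule fun _ : ℕ => g.grading i)
    (hy : y ∈ Finsupp.submodule fun _ : ℕ => g.grading j) :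
    g.tPolyBracket x y ∈ Finsupp.submodule fun _ : ℕ => g.grading (i + j) := by
  induction hx using finsupp_submodule_induction with
  | zero => simp
  | add x y _ _ hx hy => simpa using add_mem hx hy
  | single n a ha =>
    induction hy using finsupp_submodule_induction with
    | zero => simp
    | add x y _ _ hx hy => simpa using add_mem hx hy
    | single m b hb =>
      rw [tPolyBracket_single]
      exact single_mem_finsupp_submodule (g.bracket_degree i j a ha b hb)

theorem tPolyBracket_skew (g : DGLAStruct K L) {i j : ℤ} {x y : ℕ →₀ L}
    (hx : x ∈ Finsupp.submodule fun _ : ℕ => g.grading i)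
    (hy : y ∈ Finsupp.submodule fun _ : ℕ => g.grading j) :
    g.tPolyBracket x y = -((-1 : K) ^ (i * j) • g.tPolyBracket y x) := by
  induction hx using finsupp_submodule_induction with
  | zero => simp
  | add x y _ _ hx hy => simp only [map_add, LinearMap.add_apply, hx, hy, smul_add, neg_add]
  | single n a ha =>
    induction hy using finsupp_submodule_induction with
    | zero => simp
    | add x y _ _ hx hy => simp only [map_add, LinearMap.add_apply, hx, hy, smul_add, neg_add]
    | single m b hb =>
      rw [tPolyBracket_single, tPolyBracket_single, g.bracket_skew i j a ha b hb,
        Finsupp.smul_single, Finsupp.single_neg, add_comm m n]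

theorem tPolyBracket_jacobi (g : DGLAStruct K L) {i j : ℤ} {x y : ℕ →₀ L}
    (hx : x ∈ Finsupp.submodule fun _ : ℕ => g.grading i)
    (hy : y ∈ Finsupp.submodule fun _ : ℕ => g.grading j) (z : ℕ →₀ L) :
    g.tPolyBracket x (g.tPolyBracket y z) = g.tPolyBracket (g.tPolyBracket x y) z +
      (-1 : K) ^ (i * j) • g.tPolyBracket y (g.tPolyBracket x z) := by
  induction hx using finsupp_submodule_induction with
  | zero => simp
  | add x y _ _ hx hy => simp only [map_add, LinearMap.add_apply, hx, hy, smul_add]; abel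
  | single n a ha =>
    induction hy using finsupp_submodule_induction with
    | zero => simp
    | add x y _ _ hx hy => simp only [map_add, LinearMap.add_apply, hx, hy, smul_add]; abel
    | single m b hb =>
      induction z using Finsupp.induction_linear with
      | zero => simp
      | add x y hx hy => simp only [map_add, hx, hy, smul_add]; abel
      | single k c =>
        simp only [tPolyBracket_single, g.bracket_jacobi i j a ha b hb, Finsupp.smul_single,
          Finsupp.single_add]
        congr 3 <;> ring

theorem tPolyBracket_leibniz (g : DGLAStruct K L) {i : ℤ} {x : ℕ →₀ L}
    (hx : x ∈ Finsupp.submodule fun _ : ℕ => g.grading i) (y : ℕ →₀ L) :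
    Finsupp.mapRange.linearMap g.d (g.tPolyBracket x y) =
      g.tPolyBracket (Finsupp.mapRange.linearMap g.d x) y +
        (-1 : K) ^ i • g.tPolyBracket x (Finsupp.mapRange.linearMap g.d y) := by
  induction hx using finsupp_submodule_induction with
  | zero => simp
  | add x y _ _ hx hy => simp only [map_add, LinearMap.add_apply, hx, hy, smul_add]; abel
  | single n a ha =>
    induction y using Finsupp.induction_linear with
    | zero => simp
    | add x y hx hy => simp only [map_add, hx, hy, smul_add]; abel
    | single m b =>
      simp only [Finsupp.mapRange.linearMap_apply, Finsupp.mapRange_single, tPolyBracket_single,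
        g.bracket_leibniz i a ha, Finsupp.single_add, Finsupp.smul_single]

/-- The DGLA `tL[t]` of polynomials without constant term, with differential, bracket and grading
extended `K[t]`-linearly from `L`. The `n`-th coefficient of the finitely supported function is
that of `tⁿ⁺¹`. -/
noncomputable def tPoly (g : DGLAStruct K L) : DGLAStruct K (ℕ →₀ L) where
  grading i := Finsupp.submodule fun _ => g.grading i
  isInternal := isInternal_finsupp_submodule g.isInternal
  d := Finsupp.mapRange.linearMap g.d
  d_degree i x hx n := g.d_degree i (x n) (hx n)
  d_sq x := Finsupp.ext fun n => g.d_sq (x n)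
  bracket := g.tPolyBracket
  bracket_degree _ _ _ hx _ hy := g.tPolyBracket_mem hx hy
  bracket_skew _ _ _ hx _ hy := g.tPolyBracket_skew hx hy
  bracket_jacobi _ _ _ hx _ hy := g.tPolyBracket_jacobi hx hy
  bracket_leibniz _ _ hx := g.tPolyBracket_leibniz hx

theorem tPoly_bracket_single (g : DGLAStruct K L) (n m : ℕ) (a b : L) :
    g.tPoly.bracket (Finsupp.single n a) (Finsupp.single m b) =
      Finsupp.single (n + m + 1) (g.bracket a b) :=
  g.tPolyBracket_single n m a b

theorem tPoly_d_single (g : DGLAStruct K L) (n : ℕ) (a : L) :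
    g.tPoly.d (Finsupp.single n a) = Finsupp.single n (g.d a) :=
  Finsupp.mapRange_single (hf := map_zero g.d)

/-- Evaluation `tL[t] → L` at `t = 1`, as a morphism of DGLAs. -/
noncomputable def tPolyEvalOne (g : DGLAStruct K L) : DGLAStructHom g.tPoly g where
  toFun := Finsupp.lsum K fun _ => LinearMap.id
  map_grading i x hx := Submodule.sum_mem _ fun n _ => hx n
  map_d x := by
    induction x using Finsupp.induction_linear with
    | zero => simp only [map_zero]
    | add x y hx hy => simp only [map_add, hx, hy]
    | single n a => simp [tPoly_d_single]
  map_bracket x y := by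
    induction x using Finsupp.induction_linear with
    | zero => simp only [map_zero, LinearMap.zero_apply]
    | add x z hx hz => simp only [map_add, LinearMap.add_apply, hx, hz]
    | single n a =>
      induction y using Finsupp.induction_linear with
      | zero => simp only [map_zero]
      | add y z hy hz => simp only [map_add, hy, hz]
      | single m b => simp [tPoly_bracket_single]

theorem tPolyEvalOne_single (g : DGLAStruct K L) (n : ℕ) (a : L) :
    g.tPolyEvalOne.toFun (Finsupp.single n a) = a := by
  simp [tPolyEvalOne]

/-- The section `a ↦ t a` of the evaluation `tL[t] → L` at `t = 1`, as a morphism of complexes. -/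
noncomputable def tPolySection (g : DGLAStruct K L) :
    CochainMap g.toCochainStruct g.tPoly.toCochainStruct where
  toFun := Finsupp.lsingle 0
  map_grading _ _ ha := single_mem_finsupp_submodule ha
  map_d a := (g.tPoly_d_single 0 a).symm

end DGLAStruct

section PolynomialForms

variable {K : Type u} {M : Type v} [Field K] [AddCommGroup M] [Module K M]

theorem PolyDt.hom_ext {W : Type*} [AddCommGroup W] [Module K W] {f g : PolyDt K M →ₗ[K] W}
    (hinl : ∀ n m, f (inlP n m) = g (inlP n m)) (hinr : ∀ n m, f (inrP n m) = g (inrP n m)) :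
    f = g :=
  LinearMap.prod_ext (Finsupp.lhom_ext hinl) (Finsupp.lhom_ext hinr)

theorem inlP_zero (n : ℕ) : (inlP n 0 : PolyDt K M) = 0 := by
  simp [inlP]

theorem inrP_zero (n : ℕ) : (inrP n 0 : PolyDt K M) = 0 := by
  simp [inrP]

theorem evAt0_inlP_succ (n : ℕ) (m : M) : evAt0 (inlP (n + 1) m : PolyDt K M) = 0 := by
  simp [evAt0, inlP]

theorem evAt0_inrP (n : ℕ) (m : M) : evAt0 (inrP n m : PolyDt K M) = 0 := by
  simp [evAt0, inrP]

theorem evAt1_inlP (n : ℕ) (m : M) : evAt1 (inlP n m : PolyDt K M) = m := by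
  simp [evAt1, inlP]

theorem evAt1_inrP (n : ℕ) (m : M) : evAt1 (inrP n m : PolyDt K M) = 0 := by
  simp [evAt1, inrP]

namespace IsPolyFormsDGLA

variable {h : DGLAStruct K M} {mt : DGLAStruct K (PolyDt K M)}

theorem inlP_mem (hmt : IsPolyFormsDGLA h mt) (n : ℕ) {j : ℤ} {m : M} (hm : m ∈ h.grading j) :
    inlP n m ∈ mt.grading j := by
  rw [hmt.grading_eq]
  exact ⟨single_mem_finsupp_submodule (p := fun _ => h.grading j) hm, fun _ => zero_mem _⟩

theorem evAt1_d (hmt : IsPolyFormsDGLA h mt) (y : PolyDt K M) :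
    evAt1 (mt.d y) = h.d (evAt1 y) := by
  suffices evAt1 ∘ₗ mt.d = h.d ∘ₗ evAt1 from LinearMap.congr_fun this y
  refine PolyDt.hom_ext (fun n m => ?_) fun n m => ?_
  · simp only [LinearMap.comp_apply, hmt.d_inl, map_add, evAt1_inlP, evAt1_inrP, add_zero]
  · simp only [LinearMap.comp_apply, hmt.d_inr, map_neg, evAt1_inrP, neg_zero, map_zero]

theorem snd_d_inl_apply (hmt : IsPolyFormsDGLA h mt) (p : ℕ →₀ M) (n : ℕ) :
    (mt.d (p, 0)).2 n = ((n + 1 : ℕ) : K) • p (n + 1) := by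
  suffices Finsupp.lapply n ∘ₗ LinearMap.snd K _ _ ∘ₗ mt.d ∘ₗ LinearMap.inl K _ _ =
      ((n + 1 : ℕ) : K) • Finsupp.lapply (n + 1) from LinearMap.congr_fun this p
  refine Finsupp.lhom_ext fun k m => ?_
  change (mt.d (inlP k m)).2 n = ((n + 1 : ℕ) : K) • Finsupp.single k m (n + 1)
  rw [hmt.d_inl, Nat.cast_smul_eq_nsmul]
  rcases k with - | k
  · simp [inlP, inrP]
  · by_cases hk : k = n <;> simp [inlP, inrP, hk]

theorem eq_zero_of_d_eq_zero [CharZero K] (hmt : IsPolyFormsDGLA h mt) {p : ℕ →₀ M}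
    (h0 : p 0 = 0) (hd : mt.d (p, 0) = 0) : p = 0 := by
  refine Finsupp.ext fun n => ?_
  rcases n with - | n
  · exact h0
  · have hn : ((n + 1 : ℕ) : K) • p (n + 1) = 0 := by rw [← hmt.snd_d_inl_apply, hd]; rfl
    exact (smul_eq_zero.mp hn).resolve_left (Nat.cast_ne_zero.mpr n.succ_ne_zero)

theorem bracket_inlP_inrP_toFun {L : Type w} [AddCommGroup L] [Module K L]
    {g : DGLAStruct K L} (hmt : IsPolyFormsDGLA h mt) (ci : CartanHomotopy g h) (n m : ℕ)
    (a b : L) : mt.bracket (inlP n (ci.toFun a)) (inrP m (ci.toFun b)) = 0 := by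
  suffices mt.bracket.flip (inrP m (ci.toFun b)) ∘ₗ LinearMap.inl K (ℕ →₀ M) (ℕ →₀ M) ∘ₗ
      Finsupp.lsingle n ∘ₗ ci.toFun = 0 from LinearMap.congr_fun this a
  refine g.hom_ext fun p a ha => ?_
  have hlr := hmt.bracket_lr _ _ (ci.map_grading p a ha) n m (ci.toFun b)
  rw [ci.cartan_square, inrP_zero, smul_zero] at hlr
  exact hlr

end IsPolyFormsDGLA

end PolynomialForms

namespace CartanHomotopy

variable {K : Type u} {L : Type v} {M : Type w} [Field K] [AddCommGroup L] [Module K L]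
  [AddCommGroup M] [Module K M] {gL : DGLAStruct K L} {gM : DGLAStruct K M}
  {mt : DGLAStruct K (PolyDt K M)}

/-- The `K[t]`-linear extension `κ ↦ ∑ₙ i(κₙ) tⁿ⁺¹` of a Cartan homotopy `i` to `tL[t]`. -/
noncomputable def tPolyMap (ci : CartanHomotopy gL gM) : (ℕ →₀ L) →ₗ[K] PolyDt K M :=
  LinearMap.inl K (ℕ →₀ M) (ℕ →₀ M) ∘ₗ
    Finsupp.lsum K fun n => Finsupp.lsingle (n + 1) ∘ₗ ci.toFun

theorem tPolyMap_single (ci : CartanHomotopy gL gM) (n : ℕ) (a : L) :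
    ci.tPolyMap (Finsupp.single n a) = inlP (n + 1) (ci.toFun a) := by
  simp [tPolyMap, inlP]

/-- The `K[t]`-linear extension of a Cartan homotopy `L → M` to `tL[t] → M[t,dt]`. -/
noncomputable def tPoly (ci : CartanHomotopy gL gM) (hmt : IsPolyFormsDGLA gM mt) :
    CartanHomotopy gL.tPoly mt where
  toFun := ci.tPolyMap
  map_grading p κ hκ := by
    induction hκ using finsupp_submodule_induction with
    | zero => simp
    | add x y _ _ hx hy => simpa using add_mem hx hy
    | single n a ha =>
      rw [tPolyMap_single]
      exact hmt.inlP_mem (n + 1) (ci.map_grading p a ha)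
  cartan_bracket κ μ := by
    induction κ using Finsupp.induction_linear with
    | zero => simp
    | add x y hx hy => simp only [map_add, LinearMap.add_apply, hx, hy]
    | single n a =>
      induction μ using Finsupp.induction_linear with
      | zero => simp
      | add x y hx hy => simp only [map_add, hx, hy]
      | single m b =>
        simp only [gL.tPoly_bracket_single, tPolyMap_single, hmt.d_inl, map_add, hmt.bracket_ll,
          ci.cartan_bracket, ← map_nsmul, hmt.bracket_inlP_inrP_toFun, add_zero]
        congr 1
        ring
  cartan_square κ μ := by
    induction κ using Finsupp.induction_linear with
    | zero => simp
    | add x y hx hy => simp only [map_add, LinearMap.add_apply, hx, hy, add_zero]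
    | single n a =>
      induction μ using Finsupp.induction_linear with
      | zero => simp
      | add x y hx hy => simp only [map_add, hx, hy, add_zero]
      | single m b =>
        rw [tPolyMap_single, tPolyMap_single, hmt.bracket_ll, ci.cartan_square, inlP_zero]

theorem evAt0_tPolyMap (ci : CartanHomotopy gL gM) (κ : ℕ →₀ L) : evAt0 (ci.tPolyMap κ) = 0 := by
  suffices evAt0 ∘ₗ ci.tPolyMap = 0 from LinearMap.congr_fun this κ
  refine Finsupp.lhom_ext fun n a => ?_
  rw [LinearMap.comp_apply, tPolyMap_single, evAt0_inlP_succ, LinearMap.zero_apply]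

theorem evAt1_tPolyMap (ci : CartanHomotopy gL gM) (κ : ℕ →₀ L) :
    evAt1 (ci.tPolyMap κ) = ci.toFun (gL.tPolyEvalOne.toFun κ) := by
  suffices evAt1 ∘ₗ ci.tPolyMap = ci.toFun ∘ₗ gL.tPolyEvalOne.toFun from
    LinearMap.congr_fun this κ
  refine Finsupp.lhom_ext fun n a => ?_
  simp only [LinearMap.comp_apply, tPolyMap_single, evAt1_inlP, gL.tPolyEvalOne_single]

theorem evAt0_d_tPolyMap (ci : CartanHomotopy gL gM) (hmt : IsPolyFormsDGLA gM mt)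
    (κ : ℕ →₀ L) : evAt0 (mt.d (ci.tPolyMap κ)) = 0 := by
  suffices evAt0 ∘ₗ mt.d ∘ₗ ci.tPolyMap = 0 from LinearMap.congr_fun this κ
  refine Finsupp.lhom_ext fun n a => ?_
  simp only [LinearMap.comp_apply, tPolyMap_single, hmt.d_inl, map_add, evAt0_inlP_succ,
    evAt0_inrP, add_zero, LinearMap.zero_apply]

theorem evAt0_lieDeriv_tPoly (ci : CartanHomotopy gL gM) (hmt : IsPolyFormsDGLA gM mt)
    (κ : ℕ →₀ L) : evAt0 ((ci.tPoly hmt).lieDeriv κ) = 0 := by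
  rw [lieDeriv_apply, map_add]
  exact (congrArg₂ _ (ci.evAt0_d_tPolyMap hmt κ) (ci.evAt0_tPolyMap _)).trans (add_zero 0)

theorem evAt1_lieDeriv_tPoly (ci : CartanHomotopy gL gM) (hmt : IsPolyFormsDGLA gM mt)
    (κ : ℕ →₀ L) :
    evAt1 ((ci.tPoly hmt).lieDeriv κ) = ci.lieDeriv (gL.tPolyEvalOne.toFun κ) := by
  change evAt1 (mt.d (ci.tPolyMap κ) + ci.tPolyMap (gL.tPoly.d κ)) = _
  rw [map_add, hmt.evAt1_d, evAt1_tPolyMap, evAt1_tPolyMap, gL.tPolyEvalOne.map_d, lieDeriv_apply]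

theorem lieDeriv_tPoly_single_zero (ci : CartanHomotopy gL gM) (hmt : IsPolyFormsDGLA gM mt)
    (a : L) : (ci.tPoly hmt).lieDeriv (Finsupp.single 0 a) =
      (Finsupp.single 1 (ci.lieDeriv a), Finsupp.single 0 (ci.toFun a)) := by
  change mt.d (ci.tPolyMap _) + ci.tPolyMap (gL.tPoly.d _) = _
  rw [gL.tPoly_d_single, tPolyMap_single, tPolyMap_single, hmt.d_inl, lieDeriv_apply]
  simp [inlP, inrP, Finsupp.single_add]

theorem tPoly_eq_zero_of_d_eq_zero [CharZero K] (ci : CartanHomotopy gL gM)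
    (hmt : IsPolyFormsDGLA gM mt) (η : ℕ →₀ L) (hη : mt.d ((ci.tPoly hmt).toFun η) = 0) :
    (ci.tPoly hmt).toFun η = 0 :=
  Prod.ext (hmt.eq_zero_of_d_eq_zero (ci.evAt0_tPolyMap η) hη) rfl

end CartanHomotopy

section HomotopyFibre

variable {K : Type u} {N M : Type v} [Field K] [AddCommGroup N] [Module K N] [AddCommGroup M]
  [Module K M] {gN : DGLAStruct K N} {gM : DGLAStruct K M} {χ : DGLAStructHom gN gM}
  {mt : DGLAStruct K (PolyDt K M)}

theorem mem_fibreSub_iff {x : N × PolyDt K M} :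
    x ∈ fibreSub χ ↔ evAt0 x.2 = 0 ∧ evAt1 x.2 = χ.toFun x.1 := by
  simp [fibreSub, sub_eq_zero]

/-- A morphism `φ : A → N` of DGLAs induces a morphism `(a, y) ↦ (φ a, y)` from every differential
graded Lie subalgebra of `A × M[t,dt]` that it maps into the homotopy fibre. -/
noncomputable def IsHomotopyFibre.lift {A : Type*} [AddCommGroup A] [Module K A]
    {gA : DGLAStruct K A} {tw : DGLAStruct K (fibreSub χ)} (htw : IsHomotopyFibre χ mt tw)
    (S : DGLieSubalgebra (gA.prod mt)) (φ : DGLAStructHom gA gN)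
    (hS : ∀ x ∈ S.toSubmodule, (φ.toFun x.1, x.2) ∈ fibreSub χ) :
    DGLAStructHom S.toDGLAStruct tw where
  toFun := (φ.toFun.prodMap LinearMap.id ∘ₗ S.subtype).codRestrict _ fun x => hS x x.2
  map_grading p x hx := by
    rw [htw.grading_eq]
    exact ⟨φ.map_grading p _ hx.1, hx.2⟩
  map_d x := Subtype.ext <| by
    rw [htw.d_eq]
    exact Prod.ext (φ.map_d _) rfl
  map_bracket x y := Subtype.ext <| by
    rw [htw.bracket_eq]
    exact Prod.ext (φ.map_bracket _ _) rfl

theorem CartanHomotopy.resolution_tPoly_mem_fibreSub {L : Type*} [AddCommGroup L] [Module K L]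
    {gL : DGLAStruct K L} (ci : CartanHomotopy gL gM) (hmt : IsPolyFormsDGLA gM mt)
    {l : L → N} (hl : ∀ a, χ.toFun (l a) = ci.lieDeriv a) {x : L × PolyDt K M}
    (hx : x ∈ ((ci.tPoly hmt).resolution gL.tPolyEvalOne).toSubmodule) :
    (l x.1, x.2) ∈ fibreSub χ := by
  obtain ⟨κ, η, hη, rfl⟩ := mem_range_resolutionMap.mp hx
  have h0 : evAt0 ((ci.tPoly hmt).toFun η) = 0 := ci.evAt0_tPolyMap η
  have h1 : evAt1 ((ci.tPoly hmt).toFun η) = 0 := by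
    rw [← map_zero ci.toFun, ← hη]
    exact ci.evAt1_tPolyMap η
  rw [mem_fibreSub_iff, map_add, map_add, ci.evAt0_lieDeriv_tPoly, ci.evAt1_lieDeriv_tPoly, h0, h1,
    add_zero, add_zero, hl]
  exact ⟨rfl, rfl⟩

end HomotopyFibre

/-- Let `L, M` be differential graded Lie algebras over a field `K`
of characteristic `0`, `i : L → M` a Cartan homotopy with Lie derivative
`l_a = d_M i_a + i_{d_L a}`, and `N ⊂ M` a differential graded Lie subalgebra (encoded
as an injective morphism `χ : N → M`) with `l(L) ⊂ N` (encoded by the lift `lN` of `l`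
along `χ`).  Let `TW(χ) = { (x, y(t)) ∈ N × M[t,dt] : y(0) = 0, y(1) = x }` be the
homotopy fibre of the inclusion `χ : N ↪ M`.  Then there is a well-defined `L∞` morphism
`L ⇢ TW(χ)` whose linear part is the morphism of complexes
`a ↦ (l_a, t l_a + dt i_a)`. -/
theorem cartan_homotopy_gives_linfty_to_fibre {K : Type u} [Field K] [CharZero K]
    {L N M : Type u} [AddCommGroup L] [Module K L] [AddCommGroup N] [Module K N]
    [AddCommGroup M] [Module K M]
    {gL : DGLAStruct K L} {gN : DGLAStruct K N} {gM : DGLAStruct K M}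
    (ci : CartanHomotopy gL gM)
    (χ : DGLAStructHom gN gM) (hχ : Function.Injective χ.toFun)
    (lN : L →ₗ[K] N)
    (hlN : ∀ a : L, χ.toFun (lN a) = gM.d (ci.toFun a) + ci.toFun (gL.d a))
    (mt : DGLAStruct K (PolyDt K M)) (hmt : IsPolyFormsDGLA gM mt)
    (tw : DGLAStruct K ↥(fibreSub χ)) (htw : IsHomotopyFibre χ mt tw) :
    ∃ ψ : CochainMap gL.toCochainStruct tw.toCochainStruct,
      (∀ a : L, (ψ.toFun a : N × PolyDt K M) =
        (lN a,
          (Finsupp.single 1 (gM.d (ci.toFun a) + ci.toFun (gL.d a)),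
            Finsupp.single 0 (ci.toFun a)))) ∧
      ∃ zz : ZigZag (DGLA.mk (K := K) L gL) (DGLA.mk (K := K) ↥(fibreSub χ) tw),
        ∀ i : ℤ, zz.cohMap i = ψ.cohMap i := by
  let l : DGLAStructHom gL gN := χ.liftOfInjective hχ ci.lieDerivHom lN hlN
  let R := (ci.tPoly hmt).resolution gL.tPolyEvalOne
  let F : DGLAStructHom R.toDGLAStruct tw :=
    htw.lift R l fun _ => ci.resolution_tPoly_mem_fibreSub hmt hlN
  have hs : ∀ a, gL.tPolyEvalOne.toFun (gL.tPolySection.toFun a) = a := gL.tPolyEvalOne_single 0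
  let σ := (ci.tPoly hmt).resolutionSection hs
  have hqis : R.fst.IsQuasiIso :=
    (ci.tPoly hmt).fst_resolution_isQuasiIso hs (ci.tPoly_eq_zero_of_d_eq_zero hmt)
  exact ⟨F.toCochainMap.comp σ,
    fun a => Prod.ext rfl (ci.lieDeriv_tPoly_single_zero hmt a),
    ZigZag.exists_cohMap_eq_of_section hqis F ((ci.tPoly hmt).fst_resolutionSection hs)⟩
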